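/- Strong-coupling asymptotics: for every b ∈ (0,π) and every c with 0 < c < π/2 − |b − π/2|, there exist C > 0 and α₀ < 0 such that |ε(α,b) + 16π²α²| ≤ C·e^{cα} for all α ≤ α₀; moreover ε(α,b) ≥ −16π²α² for all α < 0. In particular ε(α,b) = −16π²α² + O(e^{αc}) as α → −∞. -/

import Mathlib

open Real Filter Topology Asymptotics

/-- The digamma function `ψ = Γ'/Γ`. -/
noncomputable def digamma (x : ℝ) : ℝ := deriv Real.Gamma x / Real.Gamma x

/-- The regularized Green's function `ξ(b,z)` of a point interaction at height
`b ∈ (0,π)` in the Dirichlet layer `ℝ²×(0,π)`, for energies `z < 1`: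
`ξ(b,z) = −(1/π²) Σ_{n≥1} ln√(1 − z/n²)·sin²(n b)
          + (1/(4π²))·[γ + ψ(b/π) + (π/2)·cot b]`. -/
noncomputable def xiLayer (b z : ℝ) : ℝ :=
  -(1 / π ^ 2) *
      ∑' n : ℕ, Real.log (Real.sqrt (1 - z / ((n : ℝ) + 1) ^ 2)) * Real.sin (((n : ℝ) + 1) * b) ^ 2
    + (1 / (4 * π ^ 2)) *
      (Real.eulerMascheroniConstant + digamma (b / π) + (π / 2) * Real.cot b)

/-!
By the method of images, the Green's function of the Dirichlet layer at energy `-k²` is the free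
one plus Yukawa potentials `± e^{-kr}/(4πr)` of charges at the distances `2πm`, `2πm + 2b` and
`2π(m+1) - 2b`. After regularization, `-4π ξ(b, -k²) = k + ρ(k)` with `ρ` the sum over the images.
Both sides have the same derivative in `k`, by a Fourier expansion of `cosh` on the left and
geometric series on the right, and they agree at `k = 0` by the reflection formula for `ψ`.

Pairing charges of opposite sign and telescoping gives `0 ≤ ρ(k) ≤ e^{-2dk}/d`, where
`d = π/2 - |b - π/2|` is the distance from `b` to the boundary of the layer. Hence, for `z = -k²`
and `α = ξ(b, z)`, the error `z + 16π²α² = (k + ρ)² - k²` lies between `0` and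
`2ρ(k + ρ) = -8παρ`, and `k = -4πα - ρ ≥ -4πα - 1/d` makes `ρ` of order `e^{8πdα}`.
-/

/-! ### The digamma function -/

theorem hasDerivAt_log_Gamma {x : ℝ} (hx : 0 < x) :
    HasDerivAt (log ∘ Gamma) (digamma x) x :=
  (differentiableAt_Gamma fun m => ((neg_nonpos.2 m.cast_nonneg).trans_lt hx).ne').hasDerivAt.log
    (Gamma_pos_of_pos hx).ne'

theorem monotoneOn_digamma : MonotoneOn digamma (Set.Ioi 0) :=
  (convexOn_log_Gamma.monotoneOn_deriv fun _ hx =>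
    (hasDerivAt_log_Gamma hx).differentiableAt).congr fun _ hx => (hasDerivAt_log_Gamma hx).deriv

theorem digamma_one : digamma 1 = -eulerMascheroniConstant := by
  rw [digamma, hasDerivAt_Gamma_one.deriv, Gamma_one, div_one]

theorem digamma_add_one {x : ℝ} (hx : 0 < x) : digamma (x + 1) = digamma x + 1 / x := by
  have hrec : (fun y => (log ∘ Gamma) (y + 1)) =ᶠ[𝓝 x] (log ∘ Gamma) + log := by
    filter_upwards [lt_mem_nhds hx] with y hy
    rw [Function.comp_apply, Pi.add_apply, Function.comp_apply, Gamma_add_one hy.ne',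
      log_mul hy.ne' (Gamma_pos_of_pos hy).ne', add_comm]
  rw [one_div]
  exact ((hasDerivAt_log_Gamma (by positivity)).comp_add_const x 1).unique
    (((hasDerivAt_log_Gamma hx).add (hasDerivAt_log hx.ne')).congr_of_eventuallyEq hrec)

theorem digamma_add_nat {x : ℝ} (hx : 0 < x) (n : ℕ) :
    digamma (x + n) = digamma x + ∑ m ∈ Finset.range n, 1 / (m + x) := by
  induction n with
  | zero => simp
  | succ n ih =>
    rw [Finset.sum_range_succ, ← add_assoc, ← ih, Nat.cast_succ, ← add_assoc,
      digamma_add_one (by positivity), add_comm x]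

theorem tendsto_digamma_one_add_sub_digamma_add {x : ℝ} (hx : x ∈ Set.Ioc 0 1) :
    Tendsto (fun n : ℕ => digamma (1 + n) - digamma (x + n)) atTop (𝓝 0) := by
  have hinv : Tendsto (fun n : ℕ => 1 / (x + n)) atTop (𝓝 0) :=
    tendsto_const_nhds.div_atTop
      (tendsto_atTop_add_const_left _ _ tendsto_natCast_atTop_atTop)
  have hpos (n : ℕ) : 0 < x + n := add_pos_of_pos_of_nonneg hx.1 n.cast_nonneg
  have hpos' (n : ℕ) : (0 : ℝ) < 1 + n := by positivity
  refine squeeze_zero (fun n => ?_) (fun n => ?_) hinv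
  · exact sub_nonneg.2 (monotoneOn_digamma (hpos n) (hpos' n) (by linarith [hx.2]))
  · rw [sub_le_iff_le_add', ← digamma_add_one (hpos n)]
    exact monotoneOn_digamma (hpos' n) (add_pos (hpos n) one_pos) (by linarith [hx.1])

theorem digamma_one_sub_sub_digamma {x : ℝ} (hx : x ∈ Set.Ioo 0 1) :
    digamma (1 - x) - digamma x = π * cot (π * x) := by
  have hsin {y : ℝ} (hy : y ∈ Set.Ioo 0 1) : 0 < sin (π * y) :=
    sin_pos_of_pos_of_lt_pi (mul_pos pi_pos hy.1) (mul_lt_of_lt_one_right pi_pos hy.2)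
  have hreflect : (log ∘ Gamma) + (fun y => (log ∘ Gamma) (1 - y)) =ᶠ[𝓝 x]
      fun y => log π - log (sin (π * y)) := by
    filter_upwards [Ioo_mem_nhds hx.1 hx.2] with y hy
    rw [Pi.add_apply, Function.comp_apply, Function.comp_apply,
      ← log_mul (Gamma_pos_of_pos hy.1).ne' (Gamma_pos_of_pos (sub_pos.2 hy.2)).ne',
      Gamma_mul_Gamma_one_sub, log_div pi_ne_zero (hsin hy).ne']
  have hleft := (hasDerivAt_log_Gamma hx.1).add
    ((hasDerivAt_log_Gamma (sub_pos.2 hx.2)).comp_const_sub 1 x)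
  have hright := ((((hasDerivAt_id x).const_mul π).sin.log (hsin hx).ne').const_sub
    (log π)).congr_of_eventuallyEq hreflect
  have hunique := hleft.unique hright
  rw [cot_eq_cos_div_sin]
  simp only [id, mul_one] at hunique
  linear_combination -hunique

/-! ### Potentials of image charges -/

/-- The Yukawa potential `e^{-sr}/r` of screening rate `s` at distance `r`; it is the free
Green's function in `ℝ³` at energy `-s²`, up to the factor `4π`. -/
noncomputable def yukawa (s r : ℝ) : ℝ := exp (-(s * r)) / r

theorem yukawa_nonneg (s : ℝ) {r : ℝ} (hr : 0 ≤ r) : 0 ≤ yukawa s r :=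
  div_nonneg (exp_pos _).le hr

theorem antitoneOn_yukawa {s : ℝ} (hs : 0 ≤ s) : AntitoneOn (yukawa s) (Set.Ioi 0) := by
  intro r (hr : 0 < r) r' _ hrr'
  unfold yukawa
  gcongr

theorem hasDerivAt_yukawa (s : ℝ) {r : ℝ} (hr : r ≠ 0) :
    HasDerivAt (yukawa · r) (-exp (-(s * r))) s := by
  refine ((((hasDerivAt_id s).mul_const r).neg.exp).div_const r).congr_deriv ?_
  rw [one_mul, mul_neg, neg_div, mul_div_cancel_right₀ _ hr]
  rfl

/-- The `m`-th term of the sum over image charges along a half-line: a charge at distance `m + x`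
is paired with one of opposite sign at distance `m + 1`, since neither half of the series converges
on its own at `s = 0`. -/
noncomputable def imageTerm (x s : ℝ) (m : ℕ) : ℝ := yukawa s (m + x) - yukawa s (m + 1)

/-- The total potential of the image charges on a half-line, as a function of the screening rate
`s`, in units where the spatial period of the images is `1`. -/
noncomputable def imageSum (x s : ℝ) : ℝ := ∑' m, imageTerm x s m

theorem hasDerivAt_imageTerm {x : ℝ} (hx : 0 < x) (s : ℝ) (m : ℕ) :
    HasDerivAt (imageTerm x · m) (-(exp (-(s * (m + x))) - exp (-(s * (m + 1))))) s := by
  refine ((hasDerivAt_yukawa s (by positivity)).sub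
    (hasDerivAt_yukawa s (by positivity))).congr_deriv ?_
  ring

section

variable {x s : ℝ}

theorem imageTerm_nonneg (hx : x ∈ Set.Ioc 0 1) (hs : 0 ≤ s) (m : ℕ) : 0 ≤ imageTerm x s m :=
  sub_nonneg.2 (antitoneOn_yukawa hs (Set.mem_Ioi.2 (add_pos_of_nonneg_of_pos m.cast_nonneg hx.1))
    (Set.mem_Ioi.2 (by positivity)) (by linarith [hx.2]))

theorem sum_range_imageTerm_le (hx : 0 < x) (hs : 0 ≤ s) (n : ℕ) :
    ∑ m ∈ Finset.range n, imageTerm x s m ≤ yukawa s x := by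
  calc ∑ m ∈ Finset.range n, imageTerm x s m
      ≤ ∑ m ∈ Finset.range n, (yukawa s (m + x) - yukawa s ((m + 1 : ℕ) + x)) := by
        refine Finset.sum_le_sum fun m _ => sub_le_sub_left ?_ _
        refine antitoneOn_yukawa hs (Set.mem_Ioi.2 (by positivity))
          (Set.mem_Ioi.2 (by positivity)) ?_
        rw [Nat.cast_succ]
        exact le_add_of_nonneg_right hx.le
    _ = yukawa s x - yukawa s (n + x) := by
        rw [Finset.sum_range_sub' (fun m : ℕ => yukawa s (m + x)), Nat.cast_zero, zero_add]
    _ ≤ yukawa s x := sub_le_self _ (yukawa_nonneg s (by positivity))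

theorem summable_imageTerm (hx : x ∈ Set.Ioc 0 1) (hs : 0 ≤ s) : Summable (imageTerm x s) :=
  summable_of_sum_range_le (imageTerm_nonneg hx hs) (sum_range_imageTerm_le hx.1 hs)

theorem imageSum_nonneg (hx : x ∈ Set.Ioc 0 1) (hs : 0 ≤ s) : 0 ≤ imageSum x s :=
  tsum_nonneg (imageTerm_nonneg hx hs)

theorem imageSum_le_yukawa (hx : x ∈ Set.Ioc 0 1) (hs : 0 ≤ s) : imageSum x s ≤ yukawa s x :=
  Real.tsum_le_of_sum_range_le (imageTerm_nonneg hx hs) (sum_range_imageTerm_le hx.1 hs)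

theorem antitoneOn_imageTerm (hx : x ∈ Set.Ioc 0 1) (m : ℕ) :
    AntitoneOn (imageTerm x · m) (Set.Ici 0) := by
  refine antitoneOn_of_hasDerivWithinAt_nonpos (convex_Ici 0)
    (fun s _ => (hasDerivAt_imageTerm hx.1 s m).continuousAt.continuousWithinAt)
    (fun s _ => (hasDerivAt_imageTerm hx.1 s m).hasDerivWithinAt) fun s hs => ?_
  rw [interior_Ici] at hs
  have hs : 0 < s := hs
  rw [neg_nonpos, sub_nonneg]
  gcongr
  exact hx.2

theorem continuousOn_imageSum (hx : x ∈ Set.Ioc 0 1) : ContinuousOn (imageSum x) (Set.Ici 0) := by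
  refine continuousOn_tsum
    (fun m s _ => (hasDerivAt_imageTerm hx.1 s m).continuousAt.continuousWithinAt)
    (summable_imageTerm hx le_rfl) fun m s hs => ?_
  rw [norm_of_nonneg (imageTerm_nonneg hx hs m)]
  exact antitoneOn_imageTerm hx m Set.self_mem_Ici hs hs

theorem imageSum_zero (hx : x ∈ Set.Ioc 0 1) :
    imageSum x 0 = -eulerMascheroniConstant - digamma x := by
  refine tendsto_nhds_unique (summable_imageTerm hx le_rfl).hasSum.tendsto_sum_nat ?_
  have hpartial (n : ℕ) : ∑ m ∈ Finset.range n, imageTerm x 0 m =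
      -eulerMascheroniConstant - digamma x - (digamma (1 + n) - digamma (x + n)) := by
    simp only [imageTerm, yukawa, zero_mul, neg_zero, exp_zero]
    rw [digamma_add_nat hx.1, digamma_add_nat one_pos, digamma_one, Finset.sum_sub_distrib]
    ring
  simp_rw [hpartial]
  simpa using (tendsto_digamma_one_add_sub_digamma_add hx).const_sub _

theorem hasSum_exp_image (hs : 0 < s) (x : ℝ) :
    HasSum (fun m : ℕ => exp (-(s * (m + x))) - exp (-(s * (m + 1))))
      ((exp (s * (1 / 2 - x)) - exp (-(s / 2))) / (2 * sinh (s / 2))) := by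
  have hlt : exp (-s) < 1 := exp_lt_one_iff.2 (neg_neg_of_pos hs)
  convert! (hasSum_geometric_of_lt_one (exp_pos (-s)).le hlt).mul_left
    (exp (-(s * x)) - exp (-s)) using 1
  · ext m
    rw [← exp_nat_mul, sub_mul, ← exp_add, ← exp_add]
    ring_nf
  · have hden : 1 - exp (-s) = 2 * sinh (s / 2) * exp (-(s / 2)) := by
      rw [sinh_eq, mul_div_cancel₀ _ two_ne_zero, sub_mul, ← exp_add, ← exp_add]
      ring_nf
      rw [exp_zero, neg_add_eq_sub]
    have hnum : exp (-(s * x)) - exp (-s) =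
        (exp (s * (1 / 2 - x)) - exp (-(s / 2))) * exp (-(s / 2)) := by
      rw [sub_mul, ← exp_add, ← exp_add]
      ring_nf
    rw [hden, hnum, ← div_eq_mul_inv, mul_div_mul_right _ _ (exp_ne_zero _)]

theorem hasDerivAt_imageSum (hx : x ∈ Set.Ioc 0 1) (hs : 0 < s) :
    HasDerivAt (imageSum x)
      (-((exp (s * (1 / 2 - x)) - exp (-(s / 2))) / (2 * sinh (s / 2)))) s := by
  have hs2 : 0 < s / 2 := half_pos hs
  have hmaj : Summable fun m : ℕ => exp (-(s / 2)) ^ m :=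
    summable_geometric_of_lt_one (exp_pos _).le (exp_lt_one_iff.2 (neg_neg_of_pos hs2))
  have hs_mem : s ∈ Set.Ioi (s / 2) := half_lt_self hs
  rw [← (hasSum_exp_image hs x).neg.tsum_eq]
  refine hasDerivAt_tsum_of_isPreconnected hmaj isOpen_Ioi isPreconnected_Ioi
    (fun m s _ => hasDerivAt_imageTerm hx.1 s m) (fun m s' hs' => ?_) hs_mem
    (summable_imageTerm hx hs.le) hs_mem
  have hs' : s / 2 < s' := hs'
  have hx0 := hx.1
  have hle : exp (-(s' * (m + 1))) ≤ exp (-(s' * (m + x))) := by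
    gcongr
    · linarith
    · exact hx.2
  calc ‖-(exp (-(s' * (m + x))) - exp (-(s' * (m + 1))))‖
      ≤ exp (-(s' * (m + x))) := by
        rw [norm_neg, norm_of_nonneg (sub_nonneg.2 hle)]
        exact sub_le_self _ (exp_pos _).le
    _ ≤ exp (-(s / 2)) ^ m := by
        rw [← exp_nat_mul, exp_le_exp]
        nlinarith [m.cast_nonneg (α := ℝ)]

end

/-! ### The Fourier series of `cosh` -/

local instance fact_two_pi_pos : Fact (0 < 2 * π) := ⟨Real.two_pi_pos⟩

/-- The `2π`-periodic function equal to `y ↦ cosh (k (π - y))` on `[0, 2π)`, as a continuous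
function on the circle. -/
noncomputable def coshCircle (k : ℝ) : C(AddCircle (2 * π), ℂ) where
  toFun := AddCircle.liftIco (2 * π) 0 fun y : ℝ => Complex.cosh (k * (π - y))
  continuous_toFun := by
    refine AddCircle.liftIco_zero_continuous ?_ (by fun_prop)
    rw [← Complex.cosh_neg]
    push_cast
    ring_nf

theorem coshCircle_coe (k : ℝ) {y : ℝ} (hy : y ∈ Set.Ico 0 (2 * π)) :
    coshCircle k (y : AddCircle (2 * π)) = Complex.cosh (k * (π - y)) :=
  AddCircle.liftIco_coe_apply (f := fun y : ℝ => Complex.cosh (k * (π - y))) (by rwa [zero_add])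

theorem int_sq_add_sq_ne_zero {k : ℝ} (hk : k ≠ 0) (n : ℤ) : (n ^ 2 + k ^ 2 : ℂ) ≠ 0 := by
  have : (n ^ 2 + k ^ 2 : ℝ) ≠ 0 := by positivity
  exact_mod_cast this

theorem integral_exp_mul_cosh {k : ℝ} (hk : k ≠ 0) (n : ℤ) :
    ∫ y in (0 : ℝ)..2 * π, Complex.exp (-(n * y * Complex.I)) * Complex.cosh (k * (π - y)) =
      2 * k * Complex.sinh (π * k) / (n ^ 2 + k ^ 2) := by
  have hne := int_sq_add_sq_ne_zero hk n
  let F : ℂ → ℂ := fun y => -(Complex.exp (-(n * y * Complex.I)) *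
    (k * Complex.sinh (k * (π - y)) - n * Complex.I * Complex.cosh (k * (π - y)))) /
      (n ^ 2 + k ^ 2)
  have hF (y : ℝ) : HasDerivAt (fun y : ℝ => F y)
      (Complex.exp (-(n * y * Complex.I)) * Complex.cosh (k * (π - y))) y := by
    have hexp : HasDerivAt (fun y : ℂ => Complex.exp (-(n * y * Complex.I)))
        (Complex.exp (-(n * y * Complex.I)) * -(n * Complex.I)) y := by
      simpa using (((hasDerivAt_id (y : ℂ)).const_mul (n : ℂ)).mul_const Complex.I).neg.cexp
    have hlin : HasDerivAt (fun y : ℂ => k * (π - y)) (-k : ℂ) y := by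
      simpa using ((hasDerivAt_id (y : ℂ)).const_sub (π : ℂ)).const_mul (k : ℂ)
    refine HasDerivAt.comp_ofReal (((hexp.mul ((hlin.csinh.const_mul (k : ℂ)).sub
      (hlin.ccosh.const_mul (n * Complex.I)))).neg.div_const _).congr_deriv ?_)
    rw [div_eq_iff hne, Pi.sub_apply]
    linear_combination (Complex.exp (-(n * y * Complex.I)) *
      Complex.cosh (k * (π - y)) * -n ^ 2) * Complex.I_sq
  have hperiod : Complex.exp (-(n * (2 * π) * Complex.I)) = 1 := by
    rw [← Complex.exp_int_mul_two_pi_mul_I (-n)]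
    push_cast
    ring_nf
  rw [intervalIntegral.integral_eq_sub_of_hasDerivAt (fun y _ => hF y)
    (Continuous.intervalIntegrable (by fun_prop) _ _)]
  have hreflect : (k * (π - 2 * π) : ℂ) = -(π * k) := by ring
  simp only [F]
  push_cast
  rw [hperiod, hreflect, Complex.sinh_neg, Complex.cosh_neg, sub_zero, mul_comm (k : ℂ) π]
  simp only [mul_zero, zero_mul, neg_zero, Complex.exp_zero]
  ring

theorem fourierCoeff_coshCircle {k : ℝ} (hk : k ≠ 0) (n : ℤ) :
    fourierCoeff (coshCircle k) n = k * Complex.sinh (π * k) / π * (1 / (n ^ 2 + k ^ 2)) := by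
  have hintegrand : ∫ y in (0 : ℝ)..2 * π, fourier (-n) (y : AddCircle (2 * π)) •
        coshCircle k (y : AddCircle (2 * π)) =
      ∫ y in (0 : ℝ)..2 * π,
        Complex.exp (-(n * y * Complex.I)) * Complex.cosh (k * (π - y)) := by
    refine intervalIntegral.integral_congr_Ioo_of_le two_pi_pos.le fun y hy => ?_
    rw [coshCircle_coe k (Set.Ioo_subset_Ico_self hy), fourier_coe_apply, smul_eq_mul]
    congr 2
    push_cast
    field_simp
  rw [fourierCoeff_eq_intervalIntegral _ _ 0, zero_add, hintegrand, integral_exp_mul_cosh hk,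
    Complex.real_smul]
  push_cast
  field_simp

theorem summable_one_div_int_sq_add_sq (k : ℝ) :
    Summable fun n : ℤ => 1 / ((n : ℝ) ^ 2 + k ^ 2) := by
  refine ((Real.summable_one_div_int_pow (p := 2)).2 one_lt_two).of_norm_bounded_eventually ?_
  filter_upwards [(Set.finite_singleton (0 : ℤ)).compl_mem_cofinite] with n hn
  have hn : (n : ℝ) ≠ 0 := by exact_mod_cast hn
  rw [Real.norm_of_nonneg (by positivity)]
  gcongr
  exact le_add_of_nonneg_right (sq_nonneg k)

theorem hasSum_exp_mul_I_div_int_sq_add_sq {k y : ℝ} (hk : k ≠ 0) (hy : y ∈ Set.Ico 0 (2 * π)) :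
    HasSum (fun n : ℤ => Complex.exp ((n * y : ℝ) * Complex.I) / (n ^ 2 + k ^ 2 : ℝ))
      (π / k * (cosh (k * (π - y)) / sinh (π * k)) : ℝ) := by
  have hsinh : Complex.sinh (π * k) ≠ 0 := by
    have : Real.sinh (π * k) ≠ 0 := Real.sinh_ne_zero.2 (by positivity)
    exact_mod_cast this
  have hk' : (k : ℂ) ≠ 0 := by exact_mod_cast hk
  have hsummable : Summable (fourierCoeff (coshCircle k)) := by
    rw [funext (fourierCoeff_coshCircle hk)]
    refine Summable.mul_left _ ?_
    exact_mod_cast Complex.summable_ofReal.2 (summable_one_div_int_sq_add_sq k)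
  have hseries := (has_pointwise_sum_fourier_series_of_summable hsummable y).mul_left
    (π / (k * Complex.sinh (π * k)))
  rw [coshCircle_coe k hy] at hseries
  convert! hseries using 1
  · ext n
    push_cast
    have hne := int_sq_add_sq_ne_zero hk n
    have hexp : (2 * π * Complex.I * n * y / (2 * π : ℝ) : ℂ) = n * y * Complex.I := by
      push_cast
      field_simp
    rw [fourierCoeff_coshCircle hk, fourier_coe_apply, hexp, smul_eq_mul]
    rw [mul_comm (π : ℂ) k] at hsinh ⊢
    field_simp
  · push_cast
    field_simp

theorem hasSum_cos_div_int_sq_add_sq {k y : ℝ} (hk : k ≠ 0) (hy : y ∈ Set.Ico 0 (2 * π)) :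
    HasSum (fun n : ℤ => cos (n * y) / (n ^ 2 + k ^ 2))
      (π / k * (cosh (k * (π - y)) / sinh (π * k))) := by
  simpa only [Complex.div_ofReal_re, Complex.exp_ofReal_mul_I_re, Complex.ofReal_re] using
    Complex.hasSum_re (hasSum_exp_mul_I_div_int_sq_add_sq hk hy)

theorem hasSum_int_sin_sq_div_sq_add_sq {k b : ℝ} (hk : k ≠ 0) (hb : b ∈ Set.Ico 0 π) :
    HasSum (fun n : ℤ => sin (n * b) ^ 2 / (n ^ 2 + k ^ 2))
      (π / (2 * k) * ((cosh (π * k) - cosh (k * (π - 2 * b))) / sinh (π * k))) := by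
  convert! ((hasSum_cos_div_int_sq_add_sq hk ⟨le_rfl, two_pi_pos⟩).sub
    (hasSum_cos_div_int_sq_add_sq hk (y := 2 * b)
      ⟨by linarith [hb.1], by linarith [hb.2]⟩)).div_const 2 using 1
  · ext n
    rw [sin_sq_eq_half_sub, mul_zero, cos_zero]
    ring_nf
  · rw [sub_zero, mul_comm k π]
    ring

theorem hasSum_nat_sin_sq_div_sq_add_sq {k b : ℝ} (hk : k ≠ 0) (hb : b ∈ Set.Ico 0 π) :
    HasSum (fun n : ℕ => sin ((n + 1) * b) ^ 2 / ((n + 1) ^ 2 + k ^ 2))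
      (π / (4 * k) * ((cosh (π * k) - cosh (k * (π - 2 * b))) / sinh (π * k))) := by
  have hfold := (hasSum_int_sin_sq_div_sq_add_sq hk hb).nat_add_neg.div_const 2
  have hshift := (hasSum_nat_add_iff' 1).2 hfold
  convert! hshift using 1
  · ext n
    simp only [Int.cast_neg, Int.cast_add, Int.cast_one, Int.cast_natCast, Nat.cast_add,
      Nat.cast_one, neg_mul, sin_neg, neg_sq, add_self_div_two]
  · simp only [Finset.sum_range_one, CharP.cast_eq_zero, Int.cast_zero, zero_mul, sin_zero,
      neg_zero]
    ring

/-! ### The regularized Green's function -/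

theorem hasDerivAt_log_sqrt_one_sub_div {a z : ℝ} (ha : 0 < a) (hz : z < a) :
    HasDerivAt (fun z => log √(1 - z / a)) (-(1 / 2) * (1 / (a - z))) z := by
  have hpos : 0 < 1 - z / a := sub_pos.2 ((div_lt_one ha).2 hz)
  refine (((((hasDerivAt_id z).div_const a).const_sub 1).sqrt hpos.ne').log
    (sqrt_pos.2 hpos).ne').congr_deriv ?_
  rw [id, div_div, mul_assoc, mul_self_sqrt hpos.le]
  have := (sub_pos.2 hz).ne'
  field_simp

theorem summable_one_div_nat_add_one_sq : Summable fun n : ℕ => 1 / ((n : ℝ) + 1) ^ 2 := by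
  exact_mod_cast (summable_nat_add_iff 1).2 (Real.summable_one_div_nat_pow.2 one_lt_two)

theorem sq_mul_one_sub_le_sq_sub {N r y : ℝ} (hN : 1 ≤ N) (hr : 0 ≤ r) (hy : y ≤ r) :
    N ^ 2 * (1 - r) ≤ N ^ 2 - y := by
  have hle : r ≤ N ^ 2 * r := le_mul_of_one_le_left hr (one_le_pow₀ hN)
  linarith

theorem norm_sin_sq_div_sq_sub_le {N r y : ℝ} (hN : 1 ≤ N) (hr0 : 0 ≤ r) (hr1 : r < 1)
    (hy : y ≤ r) (θ : ℝ) : ‖sin θ ^ 2 / (N ^ 2 - y)‖ ≤ 1 / (1 - r) * (1 / N ^ 2) := by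
  have hpos : 0 < N ^ 2 * (1 - r) := mul_pos (by positivity) (sub_pos.2 hr1)
  have hgap := sq_mul_one_sub_le_sq_sub hN hr0 hy
  rw [norm_of_nonneg (div_nonneg (sq_nonneg _) (hpos.le.trans hgap)), one_div_mul_one_div_rev]
  exact div_le_div₀ zero_le_one (sin_sq_le_one _) hpos hgap

theorem hasDerivAt_tsum_log_sqrt_mul_sin_sq (b : ℝ) {z : ℝ} (hz : z < 1) :
    HasDerivAt (fun z => ∑' n : ℕ, log √(1 - z / (n + 1) ^ 2) * sin ((n + 1) * b) ^ 2)
      (-(1 / 2) * ∑' n : ℕ, sin ((n + 1) * b) ^ 2 / ((n + 1) ^ 2 - z)) z := by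
  obtain ⟨r, hzr, hr1⟩ := exists_between (max_lt hz one_pos)
  have hr0 : 0 < r := (le_max_right z 0).trans_lt hzr
  have hN (n : ℕ) : (1 : ℝ) ≤ n + 1 := le_add_of_nonneg_left n.cast_nonneg
  have hterm (n : ℕ) (y : ℝ) (hy : y ∈ Set.Iio r) :
      HasDerivAt (fun z => log √(1 - z / (n + 1) ^ 2) * sin ((n + 1) * b) ^ 2)
        (-(1 / 2) * (sin ((n + 1) * b) ^ 2 / ((n + 1) ^ 2 - y))) y := by
    have hy' : y < ((n : ℝ) + 1) ^ 2 := (hy.trans hr1).trans_le (one_le_pow₀ (hN n))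
    refine ((hasDerivAt_log_sqrt_one_sub_div (by positivity) hy').mul_const _).congr_deriv ?_
    ring
  have hbound (n : ℕ) (y : ℝ) (hy : y ∈ Set.Iio r) :
      ‖-(1 / 2) * (sin ((n + 1) * b) ^ 2 / ((n + 1) ^ 2 - y))‖ ≤
        1 / (1 - r) * (1 / (n + 1) ^ 2) := by
    rw [norm_mul]
    exact (mul_le_of_le_one_left (norm_nonneg _) (by norm_num)).trans
      (norm_sin_sq_div_sq_sub_le (hN n) hr0.le hr1 (Set.mem_Iio.1 hy).le _)
  rw [← tsum_mul_left]
  refine hasDerivAt_tsum_of_isPreconnected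
    (summable_one_div_nat_add_one_sq.mul_left (1 / (1 - r))) isOpen_Iio isPreconnected_Iio
    hterm hbound (Set.mem_Iio.2 hr0) ?_ ((le_max_left z 0).trans_lt hzr)
  simp

theorem hasDerivAt_xiLayer (b : ℝ) {z : ℝ} (hz : z < 1) :
    HasDerivAt (xiLayer b)
      (1 / (2 * π ^ 2) * ∑' n : ℕ, sin ((n + 1) * b) ^ 2 / ((n + 1) ^ 2 - z)) z := by
  refine (((hasDerivAt_tsum_log_sqrt_mul_sin_sq b hz).const_mul _).add_const _).congr_deriv ?_
  ring

theorem monotoneOn_xiLayer (b : ℝ) : MonotoneOn (xiLayer b) (Set.Iio 1) := by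
  refine monotoneOn_of_hasDerivWithinAt_nonneg (convex_Iio 1)
    (fun z (hz : z < 1) => (hasDerivAt_xiLayer b hz).continuousAt.continuousWithinAt)
    (fun z hz => (hasDerivAt_xiLayer b
      (Set.mem_Iio.1 (interior_subset hz))).hasDerivWithinAt) fun z hz => ?_
  have hz : z < 1 := Set.mem_Iio.1 (interior_subset hz)
  refine mul_nonneg (by positivity) (tsum_nonneg fun n => div_nonneg (sq_nonneg _) ?_)
  nlinarith [n.cast_nonneg (α := ℝ)]

theorem eqOn_Ici_of_hasDerivAt_eq {f g f' : ℝ → ℝ} {a : ℝ} (hf : ContinuousOn f (Set.Ici a))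
    (hg : ContinuousOn g (Set.Ici a)) (hf' : ∀ x ∈ Set.Ioi a, HasDerivAt f (f' x) x)
    (hg' : ∀ x ∈ Set.Ioi a, HasDerivAt g (f' x) x) (ha : f a = g a) :
    Set.EqOn f g (Set.Ici a) := by
  intro x (hx : a ≤ x)
  obtain rfl | hax := hx.eq_or_lt
  · exact ha
  obtain ⟨c, -, hc⟩ := exists_hasDerivAt_eq_slope (f - g) (fun y => f' y - f' y) hax
    ((hf.sub hg).mono Set.Icc_subset_Ici_self) fun y hy => (hf' y hy.1).sub (hg' y hy.1)
  rw [sub_self, eq_comm, div_eq_zero_iff, or_iff_left (sub_pos.2 hax).ne', Pi.sub_apply,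
    Pi.sub_apply, ha, sub_self, sub_zero] at hc
  exact sub_eq_zero.1 hc

theorem hasDerivAt_xiLayer_neg_sq {b k : ℝ} (hb : b ∈ Set.Ico 0 π) (hk : 0 < k) :
    HasDerivAt (fun k => xiLayer b (-k ^ 2))
      (-(1 / (4 * π)) * ((cosh (π * k) - cosh (k * (π - 2 * b))) / sinh (π * k))) k := by
  have hz : -k ^ 2 < 1 := by linarith [sq_nonneg k]
  refine ((hasDerivAt_xiLayer b hz).comp k ((hasDerivAt_id k).pow 2).neg).congr_deriv ?_
  simp_rw [sub_neg_eq_add]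
  rw [(hasSum_nat_sin_sq_div_sq_add_sq hk.ne' hb).tsum_eq, id, pow_one, mul_one,
    Nat.cast_two]
  field_simp

/-- The contribution of all image charges to the Green's function of the layer at height `b` and
energy `-k ^ 2`, normalised so that `-4 * π * xiLayer b (-k ^ 2) = k + imageShift b k`; the two
terms collect the images on either side of the layer. -/
noncomputable def imageShift (b k : ℝ) : ℝ :=
  (imageSum (b / π) (2 * π * k) + imageSum (1 - b / π) (2 * π * k)) / (2 * π)

theorem div_pi_mem_Ioo {b : ℝ} (hb : b ∈ Set.Ioo 0 π) : b / π ∈ Set.Ioo 0 1 :=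
  ⟨div_pos hb.1 pi_pos, (div_lt_one pi_pos).2 hb.2⟩

section

variable {b k : ℝ}

theorem continuousOn_imageShift (hb : b ∈ Set.Ioo 0 π) :
    ContinuousOn (imageShift b) (Set.Ici 0) := by
  have hmaps : Set.MapsTo (2 * π * ·) (Set.Ici 0) (Set.Ici 0) := fun k hk =>
    mul_nonneg two_pi_pos.le hk
  have hx := div_pi_mem_Ioo hb
  have hscale : ContinuousOn (2 * π * ·) (Set.Ici 0) := by fun_prop
  exact (((continuousOn_imageSum (Set.Ioo_subset_Ioc_self hx)).comp hscale hmaps).add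
    ((continuousOn_imageSum (Set.Ioo_subset_Ioc_self (Set.Ioo.one_sub_mem hx))).comp
      hscale hmaps)).div_const _

theorem hasDerivAt_imageShift (hb : b ∈ Set.Ioo 0 π) (hk : 0 < k) :
    HasDerivAt (imageShift b)
      (-((cosh (k * (π - 2 * b)) - exp (-(π * k))) / sinh (π * k))) k := by
  have hx := div_pi_mem_Ioo hb
  have hscale : HasDerivAt (2 * π * ·) (2 * π) k := by
    simpa using (hasDerivAt_id k).const_mul (2 * π)
  have hs : 0 < 2 * π * k := by positivity
  refine ((((hasDerivAt_imageSum (Set.Ioo_subset_Ioc_self hx) hs).comp k hscale).add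
    ((hasDerivAt_imageSum (Set.Ioo_subset_Ioc_self (Set.Ioo.one_sub_mem hx)) hs).comp k
      hscale)).div_const _).congr_deriv ?_
  have hnear : 2 * π * k * (1 / 2 - b / π) = k * (π - 2 * b) := by field_simp
  have hfar : 2 * π * k * (1 / 2 - (1 - b / π)) = -(k * (π - 2 * b)) := by field_simp; ring
  have hhalf : 2 * π * k / 2 = π * k := by ring
  rw [hnear, hfar, hhalf, cosh_eq]
  field_simp
  ring

theorem xiLayer_zero (hb : b ∈ Set.Ioo 0 π) : xiLayer b 0 = -(imageShift b 0 / (4 * π)) := by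
  have hx := div_pi_mem_Ioo hb
  have hreflect := digamma_one_sub_sub_digamma hx
  rw [mul_div_cancel₀ _ pi_ne_zero, sub_eq_iff_eq_add] at hreflect
  rw [xiLayer, imageShift, mul_zero, imageSum_zero (Set.Ioo_subset_Ioc_self hx),
    imageSum_zero (Set.Ioo_subset_Ioc_self (Set.Ioo.one_sub_mem hx)), hreflect]
  simp only [zero_div, sub_zero, sqrt_one, log_one, zero_mul, tsum_zero, mul_zero, zero_add]
  field_simp
  ring

theorem xiLayer_neg_sq (hb : b ∈ Set.Ioo 0 π) (hk : 0 ≤ k) :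
    xiLayer b (-k ^ 2) = -((k + imageShift b k) / (4 * π)) := by
  refine eqOn_Ici_of_hasDerivAt_eq (f := fun k => xiLayer b (-k ^ 2))
    (g := fun k => -((k + imageShift b k) / (4 * π))) (fun k _ => ?_)
    (((continuousOn_id.add (continuousOn_imageShift hb)).div_const _).neg)
    (fun k hk => hasDerivAt_xiLayer_neg_sq (Set.Ioo_subset_Ico_self hb) hk)
    (fun k hk => ?_) ?_ hk
  · have hz : -k ^ 2 < 1 := by linarith [sq_nonneg k]
    exact ((hasDerivAt_xiLayer b hz).continuousAt.comp (f := fun k => -k ^ 2)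
      (by fun_prop)).continuousWithinAt
  · have hk : 0 < k := hk
    refine (((hasDerivAt_id k).add (hasDerivAt_imageShift hb hk)).div_const
      _).neg.congr_deriv ?_
    have : sinh (π * k) ≠ 0 := sinh_ne_zero.2 (by positivity)
    rw [← cosh_sub_sinh]
    field_simp
    ring
  · simpa using xiLayer_zero hb

theorem imageShift_nonneg (hb : b ∈ Set.Ioo 0 π) (hk : 0 ≤ k) : 0 ≤ imageShift b k := by
  have hx := div_pi_mem_Ioo hb
  have hs : 0 ≤ 2 * π * k := by positivity
  exact div_nonneg (add_nonneg (imageSum_nonneg (Set.Ioo_subset_Ioc_self hx) hs)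
    (imageSum_nonneg (Set.Ioo_subset_Ioc_self (Set.Ioo.one_sub_mem hx)) hs)) two_pi_pos.le

end

theorem yukawa_mul_div {a : ℝ} (ha : a ≠ 0) (s r : ℝ) :
    yukawa (s * a) (r / a) = a * yukawa s r := by
  rw [yukawa, yukawa, mul_assoc, mul_div_cancel₀ _ ha, div_div_eq_mul_div, mul_comm, mul_div_assoc]

theorem imageShift_le_yukawa {b d k : ℝ} (hd : 0 < d) (hb : b ∈ Set.Icc d (π - d)) (hk : 0 ≤ k) :
    imageShift b k ≤ yukawa (2 * k) d := by
  have hs : 0 ≤ 2 * k := by positivity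
  have hsum {r : ℝ} (hr : r ∈ Set.Icc d (π - d)) :
      imageSum (r / π) (2 * π * k) ≤ π * yukawa (2 * k) d := by
    have hr0 : 0 < r := hd.trans_le hr.1
    have hx : r / π ∈ Set.Ioo 0 1 := div_pi_mem_Ioo ⟨hr0, by linarith [hr.2]⟩
    calc imageSum (r / π) (2 * π * k) ≤ yukawa (2 * π * k) (r / π) :=
          imageSum_le_yukawa (Set.Ioo_subset_Ioc_self hx) (by positivity)
      _ = π * yukawa (2 * k) r := by rw [mul_right_comm, yukawa_mul_div pi_ne_zero]
      _ ≤ π * yukawa (2 * k) d :=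
          mul_le_mul_of_nonneg_left (antitoneOn_yukawa hs hd hr0 hr.1) pi_pos.le
  have hmirror : 1 - b / π = (π - b) / π := by rw [sub_div, div_self pi_ne_zero]
  rw [imageShift, div_le_iff₀ two_pi_pos, hmirror]
  have hnear := hsum hb
  have hfar := hsum (r := π - b) ⟨by linarith [hb.2], by linarith [hb.1]⟩
  linarith

theorem xiLayer_zero_nonpos {b : ℝ} (hb : b ∈ Set.Ioo 0 π) : xiLayer b 0 ≤ 0 := by
  rw [xiLayer_zero hb]
  exact neg_nonpos.2 (div_nonneg (imageShift_nonneg hb le_rfl) (by positivity))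

theorem exists_nonneg_eq_neg_sq {z : ℝ} (hz : z ≤ 0) : ∃ k, 0 ≤ k ∧ z = -k ^ 2 :=
  ⟨√(-z), sqrt_nonneg _, by rw [sq_sqrt (neg_nonneg.2 hz), neg_neg]⟩

theorem add_xiLayer_sq_nonneg {b : ℝ} (hb : b ∈ Set.Ioo 0 π) (z : ℝ) :
    0 ≤ z + 16 * π ^ 2 * xiLayer b z ^ 2 := by
  obtain hz | hz := le_or_gt 0 z
  · positivity
  obtain ⟨k, hk, rfl⟩ := exists_nonneg_eq_neg_sq hz.le
  have hρ := imageShift_nonneg hb hk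
  rw [xiLayer_neg_sq hb hk]
  field_simp
  nlinarith

theorem add_xiLayer_sq_le {b d z : ℝ} (hd : 0 < d) (hb : b ∈ Set.Icc d (π - d)) (hz : z ≤ 0) :
    z + 16 * π ^ 2 * xiLayer b z ^ 2 ≤
      8 * π * exp 2 / d * (-xiLayer b z * exp (8 * π * d * xiLayer b z)) := by
  have hb' : b ∈ Set.Ioo 0 π := ⟨by linarith [hb.1], by linarith [hb.2]⟩
  obtain ⟨k, hk, rfl⟩ := exists_nonneg_eq_neg_sq hz
  set α := xiLayer b (-k ^ 2) with hα
  set ρ := imageShift b k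
  have hkρ : k + ρ = -(4 * π * α) := by
    rw [hα, xiLayer_neg_sq hb' hk, mul_neg, neg_neg, mul_div_cancel₀ _ (by positivity)]
  have hρ0 : 0 ≤ ρ := imageShift_nonneg hb' hk
  have hρ : ρ ≤ exp (-(2 * k * d)) / d := imageShift_le_yukawa hd hb hk
  have hρd : ρ * d ≤ 1 :=
    ((le_div_iff₀ hd).1 hρ).trans (exp_le_one_iff.2 (neg_nonpos.2 (by positivity)))
  have hexp : exp (-(2 * k * d)) ≤ exp 2 * exp (8 * π * d * α) := by
    rw [← exp_add, exp_le_exp]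
    linear_combination 2 * hρd - 2 * d * hkρ
  calc -k ^ 2 + 16 * π ^ 2 * α ^ 2 = ρ * (2 * k + ρ) := by
        linear_combination (-(k + ρ) + 4 * π * α) * hkρ
    _ ≤ 2 * (k + ρ) * ρ := by nlinarith
    _ ≤ 2 * (k + ρ) * (exp 2 * exp (8 * π * d * α) / d) := by
        gcongr
        exact hρ.trans (by gcongr)
    _ = 8 * π * exp 2 / d * (-α * exp (8 * π * d * α)) := by
        rw [hkρ]
        ring

theorem neg_mul_exp_mul_le {δ : ℝ} (hδ : 0 < δ) (t : ℝ) : -t * exp (δ * t) ≤ exp (-1) / δ := by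
  rw [le_div_iff₀ hδ]
  convert! mul_exp_neg_le_exp_neg_one (-(δ * t)) using 1
  rw [neg_neg]
  ring

theorem add_xiLayer_sq_le_mul_exp {b c d z : ℝ} (hd : 0 < d) (hb : b ∈ Set.Icc d (π - d))
    (hc : c < 8 * π * d) (hz : z ≤ 0) :
    z + 16 * π ^ 2 * xiLayer b z ^ 2 ≤
      8 * π * exp 2 / d * (exp (-1) / (8 * π * d - c)) * exp (c * xiLayer b z) := by
  set α := xiLayer b z
  have hsplit : exp (8 * π * d * α) = exp ((8 * π * d - c) * α) * exp (c * α) := by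
    rw [← exp_add]
    ring_nf
  calc z + 16 * π ^ 2 * α ^ 2 ≤ 8 * π * exp 2 / d * (-α * exp (8 * π * d * α)) :=
        add_xiLayer_sq_le hd hb hz
    _ = 8 * π * exp 2 / d * (-α * exp ((8 * π * d - c) * α)) * exp (c * α) := by
        rw [hsplit]
        ring
    _ ≤ 8 * π * exp 2 / d * (exp (-1) / (8 * π * d - c)) * exp (c * α) := by
        gcongr
        exact neg_mul_exp_mul_le (sub_pos.2 hc) α

theorem eigenvalue_strong_coupling_asymptotics_general (b c : ℝ) (hb0 : 0 < b) (hbπ : b < π)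
    (hc : c < 8 * π * (π / 2 - |b - π / 2|))
    (ε : ℝ → ℝ) (hε : ∀ α : ℝ, ε α < 1 ∧ xiLayer b (ε α) = α) :
    (∃ C : ℝ, 0 < C ∧ ∃ α₀ : ℝ, α₀ < 0 ∧ ∀ α : ℝ, α ≤ α₀ →
        |ε α + 16 * π ^ 2 * α ^ 2| ≤ C * Real.exp (c * α)) ∧
    (∀ α : ℝ, α < 0 → -(16 * π ^ 2 * α ^ 2) ≤ ε α) := by
  have hlower (α : ℝ) : 0 ≤ ε α + 16 * π ^ 2 * α ^ 2 := by
    simpa only [(hε α).2] using add_xiLayer_sq_nonneg ⟨hb0, hbπ⟩ (ε α)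
  refine ⟨?_, fun α _ => neg_le_iff_add_nonneg.2 (hlower α)⟩
  obtain ⟨d, hd⟩ : ∃ d, d = π / 2 - |b - π / 2| := ⟨_, rfl⟩
  rw [← hd] at hc
  have hd0 : 0 < d := by
    rw [hd, sub_pos, abs_lt]
    constructor <;> linarith
  have hbd : b ∈ Set.Icc d (π - d) := by
    constructor <;> linarith [le_abs_self (b - π / 2), neg_abs_le (b - π / 2)]
  have : 0 < 8 * π * d - c := sub_pos.2 hc
  refine ⟨8 * π * exp 2 / d * (exp (-1) / (8 * π * d - c)), by positivity, xiLayer b 0 - 1,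
    by linarith [xiLayer_zero_nonpos ⟨hb0, hbπ⟩], fun α hα => ?_⟩
  have hneg : ε α < 0 := (monotoneOn_xiLayer b).reflect_lt (hε α).1 (Set.mem_Iio.2 one_pos)
    (by linarith [(hε α).2])
  rw [abs_of_nonneg (hlower α)]
  simpa only [(hε α).2] using add_xiLayer_sq_le_mul_exp hd0 hbd hc hneg.le

/-- Strong-coupling asymptotics of the bound-state energy: if `ε(α)` denotes the unique
`z < 1` with `ξ(b,z) = α`, then for every `0 < c < π/2 − |b − π/2|` there are `C > 0`
and `α₀ < 0` with `|ε(α) + 16π²α²| ≤ C·e^{cα}` for all `α ≤ α₀`; moreover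
`ε(α) ≥ −16π²α²` for all `α < 0`. -/
theorem eigenvalue_strong_coupling_asymptotics (b c : ℝ) (hb0 : 0 < b) (hbπ : b < π)
    (hc0 : 0 < c) (hc : c < π / 2 - |b - π / 2|)
    (ε : ℝ → ℝ) (hε : ∀ α : ℝ, ε α < 1 ∧ xiLayer b (ε α) = α) :
    (∃ C : ℝ, 0 < C ∧ ∃ α₀ : ℝ, α₀ < 0 ∧ ∀ α : ℝ, α ≤ α₀ →
        |ε α + 16 * π ^ 2 * α ^ 2| ≤ C * Real.exp (c * α)) ∧
    (∀ α : ℝ, α < 0 → -(16 * π ^ 2 * α ^ 2) ≤ ε α) := by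
  have hd : π / 2 - |b - π / 2| ≤ 8 * π * (π / 2 - |b - π / 2|) :=
    le_mul_of_one_le_left (hc0.trans hc).le (by linarith [pi_gt_three])
  exact eigenvalue_strong_coupling_asymptotics_general b c hb0 hbπ (hc.trans_le hd) ε hε
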